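/- Let n ≥ 2, let b be a real number with |b| < 1, let F(y) = ‖y‖ + b·y₁ on ℝⁿ, and let a, a' be real numbers with a² + a'² = 1; set v = a e₁ + a' e₂. Let τ(y) = ln √(det g(y)) be defined for y ≠ 0, where g(y) is the Hessian of ½F² at y. Then the partial derivatives of τ at v are: ∂τ/∂y₁(v) = (n+1) b a'² / (2(1+ab)), ∂τ/∂y₂(v) = −(n+1) b a a' / (2(1+ab)), and ∂τ/∂y_i(v) = 0 for every i with 3 ≤ i ≤ n. -/

import Mathlib

/-!
Write `r = ‖y‖`, `u = y / r`, `w = u + b e₁` and `φ = F(y) / r = 1 + b y₁ / r`, so that `⟨u, w⟩ = φ`.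
Differentiating `½ F²` twice away from the origin gives `g = φ (I - u uᵀ) + w wᵀ`, a rank-two
perturbation of `φ I`. The Weinstein–Aronszajn identity `det (1 + A B) = det (1 + B A)` reduces its
determinant to a `2 × 2` one, and `det g = φ ^ (n + 1)` (`det_fundTensor`). Since `|b| < 1` makes
`φ` positive, `τ = ((n + 1) / 2) log φ` near every `y ≠ 0`, and its gradient can be read off
(`fderiv_log_sqrt_det`).
-/

/-- The Randers norm `F(y) = ‖y‖ + b·y₁` on `ℝⁿ` (Euclidean norm). -/
noncomputable def randersF (n : ℕ) (hn : 0 < n) (b : ℝ)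
    (y : EuclideanSpace ℝ (Fin n)) : ℝ :=
  ‖y‖ + b * y ⟨0, hn⟩

/-- The fundamental tensor of the Randers norm: the Hessian matrix of
`½ F²` at `y`, with entries `g_ij(y) = ½ ∂²(F²)/∂yⁱ∂yʲ (y)`. -/
noncomputable def fundTensor (n : ℕ) (hn : 0 < n) (b : ℝ)
    (y : EuclideanSpace ℝ (Fin n)) : Matrix (Fin n) (Fin n) ℝ :=
  fun i j =>
    fderiv ℝ (fun z => fderiv ℝ (fun w => randersF n hn b w ^ 2 / 2) z
      (EuclideanSpace.single j 1)) y (EuclideanSpace.single i 1)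

theorem hasFDerivAt_norm_of_ne {n : ℕ} {z : EuclideanSpace ℝ (Fin n)} (hz : z ≠ 0) :
    HasFDerivAt (fun w : EuclideanSpace ℝ (Fin n) => ‖w‖) (‖z‖⁻¹ • innerSL ℝ z) z := by
  have hr : ‖z‖ ≠ 0 := norm_ne_zero_iff.mpr hz
  have h := (hasStrictFDerivAt_norm_sq z).hasFDerivAt.sqrt (pow_ne_zero 2 hr)
  simp only [Real.sqrt_sq (norm_nonneg _)] at h
  refine h.congr_fderiv ?_
  ext x
  simp
  field_simp

theorem hasFDerivAt_coord {n : ℕ} (i : Fin n) (z : EuclideanSpace ℝ (Fin n)) :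
    HasFDerivAt (fun w : EuclideanSpace ℝ (Fin n) => w i)
      (EuclideanSpace.proj i : EuclideanSpace ℝ (Fin n) →L[ℝ] ℝ) z :=
  (EuclideanSpace.proj i : EuclideanSpace ℝ (Fin n) →L[ℝ] ℝ).hasFDerivAt

theorem hasFDerivAt_randersF {n : ℕ} (hn : 0 < n) (b : ℝ) {z : EuclideanSpace ℝ (Fin n)}
    (hz : z ≠ 0) :
    HasFDerivAt (randersF n hn b) (‖z‖⁻¹ • innerSL ℝ z +
      b • (EuclideanSpace.proj ⟨0, hn⟩ : EuclideanSpace ℝ (Fin n) →L[ℝ] ℝ)) z :=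
  (hasFDerivAt_norm_of_ne hz).add ((hasFDerivAt_coord ⟨0, hn⟩ z).const_mul b)

/-- The coordinates of the vector `w = y / ‖y‖ + b e₁`, the Euclidean gradient of `F` at `y`. -/
noncomputable def randersGrad (n : ℕ) (hn : 0 < n) (b : ℝ)
    (y : EuclideanSpace ℝ (Fin n)) (j : Fin n) : ℝ :=
  ‖y‖⁻¹ * y j + b * (if j = ⟨0, hn⟩ then 1 else 0)

theorem fderiv_half_sq {n : ℕ} (hn : 0 < n) (b : ℝ) {z : EuclideanSpace ℝ (Fin n)}
    (hz : z ≠ 0) (j : Fin n) :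
    fderiv ℝ (fun w => randersF n hn b w ^ 2 / 2) z (EuclideanSpace.single j 1)
      = randersF n hn b z * randersGrad n hn b z j := by
  have h := ((hasFDerivAt_randersF hn b hz).pow 2).mul_const (2⁻¹ : ℝ)
  simp only [← div_eq_mul_inv] at h
  rw [h.fderiv]
  simp [randersGrad, EuclideanSpace.inner_single_right, eq_comm]
  split_ifs <;> ring

/-- Entrywise form of `g = w wᵀ + F · Hess ‖·‖` away from the origin. -/
theorem fundTensor_apply {n : ℕ} (hn : 0 < n) (b : ℝ) {y : EuclideanSpace ℝ (Fin n)}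
    (hy : y ≠ 0) (i j : Fin n) :
    fundTensor n hn b y i j
      = randersGrad n hn b y i * randersGrad n hn b y j
        + randersF n hn b y * (‖y‖⁻¹ * (if i = j then 1 else 0) - ‖y‖⁻¹ ^ 3 * (y i * y j)) := by
  have hr : ‖y‖ ≠ 0 := norm_ne_zero_iff.mpr hy
  have hev : (fun z => fderiv ℝ (fun w => randersF n hn b w ^ 2 / 2) z
      (EuclideanSpace.single j 1)) =ᶠ[nhds y]
      fun z => randersF n hn b z * randersGrad n hn b z j := by
    filter_upwards [isOpen_ne.mem_nhds hy] with z hz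
    exact fderiv_half_sq hn b hz j
  have hinv : HasFDerivAt (fun w : EuclideanSpace ℝ (Fin n) => ‖w‖⁻¹)
      (-(‖y‖ ^ 2)⁻¹ • (‖y‖⁻¹ • innerSL ℝ y)) y :=
    (hasDerivAt_inv hr).comp_hasFDerivAt y (hasFDerivAt_norm_of_ne hy)
  have hg := (hinv.mul (hasFDerivAt_coord j y)).add_const
    (b * (if j = ⟨0, hn⟩ then 1 else 0))
  have h := (hasFDerivAt_randersF hn b hy).mul hg
  unfold fundTensor
  rw [hev.fderiv_eq]
  have h' : HasFDerivAt (fun z => randersF n hn b z * randersGrad n hn b z j) _ y := h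
  rw [h'.fderiv]
  simp [randersGrad, EuclideanSpace.inner_single_right, eq_comm]
  split_ifs <;> field_simp <;> ring

/-- The ratio `φ = F(y) / ‖y‖` is positive; this is where `|b| < 1` enters. -/
theorem ratio_pos {n : ℕ} (hn : 0 < n) {b : ℝ} (hb : |b| < 1) {y : EuclideanSpace ℝ (Fin n)}
    (hy : y ≠ 0) : 0 < 1 + b * (y ⟨0, hn⟩ * ‖y‖⁻¹) := by
  have hr : 0 < ‖y‖ := norm_pos_iff.mpr hy
  have h1 : |y ⟨0, hn⟩| ≤ ‖y‖ := by
    simpa using EuclideanSpace.norm_eq y ▸ PiLp.norm_apply_le y ⟨0, hn⟩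
  have h2 : |y ⟨0, hn⟩ * ‖y‖⁻¹| ≤ 1 := by
    rw [abs_mul, abs_inv, abs_norm, ← div_eq_mul_inv]
    exact (div_le_one hr).mpr h1
  have h3 : |b * (y ⟨0, hn⟩ * ‖y‖⁻¹)| < 1 := by
    rw [abs_mul]
    nlinarith [abs_nonneg b, abs_nonneg (y ⟨0, hn⟩ * ‖y‖⁻¹)]
  linarith [(abs_lt.mp h3).1]

/-- The determinant of `φ (I - u uᵀ) + w wᵀ` for a unit vector `u` with `⟨u, w⟩ = φ`. In the
reduced matrix `!![0, 1; -φ, 1 + ⟨w, w⟩ / φ]` the value of `⟨w, w⟩` plays no role. -/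
theorem det_rank_two {n : ℕ} (u w : Fin n → ℝ) (φ : ℝ) (hφ : φ ≠ 0)
    (huu : ∑ i, u i * u i = 1) (huw : ∑ i, u i * w i = φ) :
    (Matrix.of fun i j => w i * w j + φ * ((if i = j then 1 else 0) - u i * u j)).det
      = φ ^ (n + 1) := by
  let A : Matrix (Fin n) (Fin 2) ℝ := Matrix.of fun i => ![-u i, w i / φ]
  let B : Matrix (Fin 2) (Fin n) ℝ := Matrix.of ![u, w]
  have e : (Matrix.of fun i j => w i * w j + φ * ((if i = j then 1 else 0) - u i * u j))
      = φ • (1 + A * B) := by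
    ext i j
    simp [A, B, Matrix.mul_apply, Fin.sum_univ_two, Matrix.one_apply]
    field_simp
    ring
  have h00 : (1 + B * A : Matrix (Fin 2) (Fin 2) ℝ) 0 0 = 0 := by
    simp [A, B, Matrix.vecMul, dotProduct, huu]
  have h01 : (1 + B * A : Matrix (Fin 2) (Fin 2) ℝ) 0 1 = 1 := by
    simp [A, B, Matrix.vecMul, dotProduct, mul_div_assoc', ← Finset.sum_div, huw, hφ]
  have h10 : (1 + B * A : Matrix (Fin 2) (Fin 2) ℝ) 1 0 = -φ := by
    simp [A, B, Matrix.vecMul, dotProduct, ← huw, mul_comm]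
  rw [e, Matrix.det_smul, Matrix.det_one_add_mul_comm, Matrix.det_fin_two, h00, h01, h10,
    Fintype.card_fin]
  ring

theorem det_fundTensor {n : ℕ} (hn : 0 < n) {b : ℝ} (hb : |b| < 1)
    {y : EuclideanSpace ℝ (Fin n)} (hy : y ≠ 0) :
    (fundTensor n hn b y).det = (1 + b * (y ⟨0, hn⟩ * ‖y‖⁻¹)) ^ (n + 1) := by
  have hr : ‖y‖ ≠ 0 := norm_ne_zero_iff.mpr hy
  have hs : ∑ i, y i * y i = ‖y‖ ^ 2 := by
    rw [EuclideanSpace.real_norm_sq_eq]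
    simp [sq]
  have huu : ∑ i, (‖y‖⁻¹ * y i) * (‖y‖⁻¹ * y i) = 1 := by
    have : ∀ i, (‖y‖⁻¹ * y i) * (‖y‖⁻¹ * y i) = ‖y‖⁻¹ ^ 2 * (y i * y i) := fun i => by ring
    simp only [this, ← Finset.mul_sum, hs]
    field_simp
  rw [← det_rank_two (fun i => ‖y‖⁻¹ * y i) (randersGrad n hn b y) _
    (ratio_pos hn hb hy).ne' huu]
  · congr 1
    ext i j
    rw [fundTensor_apply hn b hy]
    simp only [Matrix.of_apply, randersF]
    field_simp
  · simp only [randersGrad, mul_add, Finset.sum_add_distrib, huu]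
    simp
    ring

/-- The gradient of `τ` at any unit vector `y`, where
`∂φ/∂yᵢ = b (δᵢ₁ - y₁ yᵢ)` and `φ = 1 + b y₁`. -/
theorem fderiv_log_sqrt_det {n : ℕ} (hn : 0 < n) {b : ℝ} (hb : |b| < 1)
    {y : EuclideanSpace ℝ (Fin n)} (hy : ‖y‖ = 1) (i : Fin n) :
    fderiv ℝ (fun y => Real.log (Real.sqrt (fundTensor n hn b y).det)) y
        (EuclideanSpace.single i 1)
      = ((n : ℝ) + 1) / 2 * (b * ((if i = ⟨0, hn⟩ then 1 else 0) - y ⟨0, hn⟩ * y i)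
          / (1 + b * y ⟨0, hn⟩)) := by
  have hy0 : y ≠ 0 := by
    rintro rfl
    simp at hy
  have hr : ‖y‖ ≠ 0 := norm_ne_zero_iff.mpr hy0
  have hev : (fun y => Real.log (Real.sqrt (fundTensor n hn b y).det)) =ᶠ[nhds y]
      fun z => ((n : ℝ) + 1) / 2 * Real.log (1 + b * (z ⟨0, hn⟩ * ‖z‖⁻¹)) := by
    filter_upwards [isOpen_ne.mem_nhds hy0] with z hz
    have hp := ratio_pos hn hb hz
    rw [det_fundTensor hn hb hz, Real.log_sqrt (pow_pos hp _).le, Real.log_pow]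
    push_cast
    ring
  have hinv : HasFDerivAt (fun w : EuclideanSpace ℝ (Fin n) => ‖w‖⁻¹)
      (-(‖y‖ ^ 2)⁻¹ • (‖y‖⁻¹ • innerSL ℝ y)) y :=
    (hasDerivAt_inv hr).comp_hasFDerivAt y (hasFDerivAt_norm_of_ne hy0)
  have h := (((((hasFDerivAt_coord ⟨0, hn⟩ y).mul hinv).const_mul b).const_add 1).log
    (ratio_pos hn hb hy0).ne').const_mul (((n : ℝ) + 1) / 2)
  have h' : HasFDerivAt
    (fun z : EuclideanSpace ℝ (Fin n) =>
      ((n : ℝ) + 1) / 2 * Real.log (1 + b * (z ⟨0, hn⟩ * ‖z‖⁻¹))) _ y := h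
  rw [hev.fderiv_eq, h'.fderiv]
  simp [EuclideanSpace.inner_single_right, hy,
    @eq_comm _ (⟨0, hn⟩ : Fin n) i]
  split_ifs <;> ring

/-- The mean Cartan torsion coefficients of the Randers norm at the unit
vector `v = a e₁ + a' e₂`: the partial derivatives of
`τ(y) = ln √(det g(y))` at `v`. -/
theorem killing_frames_stmt6 (n : ℕ) (hn : 2 ≤ n) (b : ℝ) (hb : |b| < 1)
    (a a' : ℝ) (ha : a ^ 2 + a' ^ 2 = 1)
    (v : EuclideanSpace ℝ (Fin n))
    (hv : v = a • EuclideanSpace.single (⟨0, by omega⟩ : Fin n) 1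
        + a' • EuclideanSpace.single (⟨1, by omega⟩ : Fin n) 1) :
    fderiv ℝ (fun y => Real.log (Real.sqrt (fundTensor n (by omega) b y).det))
        v (EuclideanSpace.single (⟨0, by omega⟩ : Fin n) 1)
      = ((n : ℝ) + 1) * b * a' ^ 2 / (2 * (1 + a * b))
    ∧ fderiv ℝ (fun y => Real.log (Real.sqrt (fundTensor n (by omega) b y).det))
        v (EuclideanSpace.single (⟨1, by omega⟩ : Fin n) 1)
      = -(((n : ℝ) + 1) * b * a * a' / (2 * (1 + a * b)))
    ∧ ∀ i : Fin n, 2 ≤ (i : ℕ) →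
      fderiv ℝ (fun y => Real.log (Real.sqrt (fundTensor n (by omega) b y).det))
        v (EuclideanSpace.single i 1) = 0 := by
  have h01 : (⟨1, by omega⟩ : Fin n) ≠ ⟨0, by omega⟩ := by simp
  have hv0 : v ⟨0, by omega⟩ = a := by simp [hv]
  have hv1 : v ⟨1, by omega⟩ = a' := by simp [hv]
  have hvn : ‖v‖ = 1 := by
    have h2 : ‖v‖ ^ 2 = 1 := by
      rw [← real_inner_self_eq_norm_sq]
      nth_rewrite 1 [hv]
      simp [inner_add_left, inner_smul_left, EuclideanSpace.inner_single_left, hv0, hv1]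
      linarith
    nlinarith [norm_nonneg v]
  have key := fderiv_log_sqrt_det (by omega : 0 < n) hb hvn
  refine ⟨?_, ?_, fun i hi => ?_⟩
  · rw [key, hv0, if_pos rfl, (by linarith : a' ^ 2 = 1 - a * a), mul_comm a b]
    simp only [div_eq_mul_inv, mul_inv]
    ring
  · rw [key, hv0, hv1, if_neg h01, mul_comm a b]
    simp only [div_eq_mul_inv, mul_inv]
    ring
  · have hi0 : i ≠ ⟨0, by omega⟩ := by
      intro h
      simp [h] at hi
    have hi1 : i ≠ ⟨1, by omega⟩ := by
      intro h
      simp [h] at hi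
    have hvi : v i = 0 := by simp [hv, hi0, hi1]
    rw [key, hvi, if_neg hi0]
    simp
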